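/- arXiv:1411.6749 — 4 statements merged into one kernel-verified Lean document; each statement's English description precedes it below -/
import Mathlib

section
/- Let R > 0 and let 0 ≤ γ ≤ 2R. The area (two-dimensional Lebesgue measure) of the intersection of two closed discs in the plane, each of radius R, whose centers are at distance γ from each other, equals A_s(γ) = 2R² arccos(γ/(2R)) − γ·√(R² − γ²/4). -/
open MeasureTheory Metric

/-!
A rigid motion carries the midpoint of the centers to the origin and the line through them to the
first coordinate axis, so with `d = γ / 2` the lens becomes the set of `(x, y)` with
`(x ± d)² + y² ≤ R²` (`exists_lens_coordinates`). Its horizontal slice at height `y` is the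
segment `|x| ≤ √(R² - y²) - d` (`volume_lens_slice`), which is nondegenerate for
`|y| < h = √(R² - d²)`. By Tonelli the area is `∫ y in -h..h, 2 (√(R² - y²) - d)`, and the
antiderivative `y √(R² - y²) + R² arcsin (y / R) - 2 d y` evaluates this to
`2 R² arccos (d / R) - 2 d h` (`integral_lens`).
-/

/-- The intersection of the discs of radius `R` centered at `(-d, 0)` and `(d, 0)`. -/
def lens (R d : ℝ) : Set (ℝ × ℝ) :=
  {p | (p.1 + d) ^ 2 + p.2 ^ 2 ≤ R ^ 2 ∧ (p.1 - d) ^ 2 + p.2 ^ 2 ≤ R ^ 2}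

lemma measurableSet_lens (R d : ℝ) : MeasurableSet (lens R d) := by
  have h1 : MeasurableSet {p : ℝ × ℝ | (p.1 + d) ^ 2 + p.2 ^ 2 ≤ R ^ 2} :=
    measurableSet_le (by fun_prop) (by fun_prop)
  have h2 : MeasurableSet {p : ℝ × ℝ | (p.1 - d) ^ 2 + p.2 ^ 2 ≤ R ^ 2} :=
    measurableSet_le (by fun_prop) (by fun_prop)
  exact h1.inter h2

/-- The formula also covers the empty slices: for `R ^ 2 < y ^ 2` the square root is `0`, and
`ENNReal.ofReal` truncates negative lengths to `0`. -/
lemma volume_lens_slice {R d : ℝ} (hd : 0 ≤ d) (y : ℝ) :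
    volume ((fun x : ℝ => (x, y)) ⁻¹' lens R d) =
      ENNReal.ofReal (2 * (Real.sqrt (R ^ 2 - y ^ 2) - d)) := by
  rcases lt_or_ge (R ^ 2 - y ^ 2) 0 with hy | hy
  · have : (fun x : ℝ => (x, y)) ⁻¹' lens R d = ∅ := by
      ext x
      simp only [lens, Set.mem_preimage, Set.mem_ofPred_eq, Set.mem_empty_iff_false, iff_false]
      rintro ⟨h, -⟩
      nlinarith [sq_nonneg (x + d)]
    rw [this, measure_empty, Real.sqrt_eq_zero_of_nonpos hy.le, eq_comm, ENNReal.ofReal_eq_zero]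
    linarith
  · have : (fun x : ℝ => (x, y)) ⁻¹' lens R d =
        Set.Icc (-(Real.sqrt (R ^ 2 - y ^ 2) - d)) (Real.sqrt (R ^ 2 - y ^ 2) - d) := by
      ext x
      have h1 : (x + d) ^ 2 + y ^ 2 ≤ R ^ 2 ↔ |x + d| ≤ Real.sqrt (R ^ 2 - y ^ 2) := by
        rw [Real.le_sqrt (abs_nonneg _) hy, sq_abs]
        constructor <;> intro h <;> linarith
      have h2 : (x - d) ^ 2 + y ^ 2 ≤ R ^ 2 ↔ |x - d| ≤ Real.sqrt (R ^ 2 - y ^ 2) := by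
        rw [Real.le_sqrt (abs_nonneg _) hy, sq_abs]
        constructor <;> intro h <;> linarith
      simp only [lens, Set.mem_preimage, Set.mem_ofPred_eq, h1, h2, abs_le, Set.mem_Icc]
      constructor
      · rintro ⟨⟨_, _⟩, _, _⟩
        constructor <;> linarith
      · rintro ⟨_, _⟩
        refine ⟨⟨?_, ?_⟩, ?_, ?_⟩ <;> linarith
    rw [this, Real.volume_Icc]
    congr 1
    ring

lemma hasDerivAt_lens {R : ℝ} (hR : 0 < R) (d : ℝ) {y : ℝ} (hy : y ^ 2 < R ^ 2) :
    HasDerivAt (fun y => y * Real.sqrt (R ^ 2 - y ^ 2) + R ^ 2 * Real.arcsin (y / R) - 2 * d * y)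
      (2 * (Real.sqrt (R ^ 2 - y ^ 2) - d)) y := by
  have hpos : 0 < R ^ 2 - y ^ 2 := by linarith
  have habs : |y| < R := abs_lt_of_sq_lt_sq hy hR.le
  obtain ⟨hl, hr⟩ := abs_lt.mp habs
  have h1 : y / R ≠ -1 := by
    rw [Ne, div_eq_iff hR.ne']; linarith
  have h2 : y / R ≠ 1 := by
    rw [Ne, div_eq_iff hR.ne']; linarith
  have hs : HasDerivAt (fun y => Real.sqrt (R ^ 2 - y ^ 2))
      ((-(2 * y)) / (2 * Real.sqrt (R ^ 2 - y ^ 2))) y := by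
    refine HasDerivAt.sqrt ?_ hpos.ne'
    simpa using ((hasDerivAt_id y).pow 2).const_sub (R ^ 2)
  have ha := (Real.hasDerivAt_arcsin h1 h2).comp y ((hasDerivAt_id y).div_const R)
  have H := (((hasDerivAt_id y).mul hs).add (ha.const_mul (R ^ 2))).sub
    ((hasDerivAt_id y).const_mul (2 * d))
  refine H.congr_deriv ?_
  have hsq : Real.sqrt (1 - (y / R) ^ 2) = Real.sqrt (R ^ 2 - y ^ 2) / R := by
    rw [show 1 - (y / R) ^ 2 = (R ^ 2 - y ^ 2) / R ^ 2 by field_simp, Real.sqrt_div hpos.le,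
      Real.sqrt_sq hR.le]
  have hS : 0 < Real.sqrt (R ^ 2 - y ^ 2) := Real.sqrt_pos.mpr hpos
  have hS2 : Real.sqrt (R ^ 2 - y ^ 2) ^ 2 = R ^ 2 - y ^ 2 := Real.sq_sqrt hpos.le
  simp only [id, hsq]
  generalize Real.sqrt (R ^ 2 - y ^ 2) = S at *
  field_simp
  linear_combination -hS2

lemma integral_lens {R d : ℝ} (hR : 0 < R) (hd : 0 ≤ d) (hdR : d ≤ R) :
    ∫ y in (-Real.sqrt (R ^ 2 - d ^ 2))..(Real.sqrt (R ^ 2 - d ^ 2)),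
        2 * (Real.sqrt (R ^ 2 - y ^ 2) - d) =
      2 * R ^ 2 * Real.arccos (d / R) - 2 * d * Real.sqrt (R ^ 2 - d ^ 2) := by
  have hnn : 0 ≤ R ^ 2 - d ^ 2 := by nlinarith
  have hh2 : Real.sqrt (R ^ 2 - d ^ 2) ^ 2 = R ^ 2 - d ^ 2 := Real.sq_sqrt hnn
  have hh0 : 0 ≤ Real.sqrt (R ^ 2 - d ^ 2) := Real.sqrt_nonneg _
  have hasin : Real.arcsin (Real.sqrt (R ^ 2 - d ^ 2) / R) = Real.arccos (d / R) := by
    rw [Real.arccos_eq_arcsin (by positivity),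
      show 1 - (d / R) ^ 2 = (R ^ 2 - d ^ 2) / R ^ 2 by field_simp, Real.sqrt_div hnn,
      Real.sqrt_sq hR.le]
  rw [intervalIntegral.integral_eq_sub_of_hasDerivAt_of_le (by linarith)
    (f := fun y => y * Real.sqrt (R ^ 2 - y ^ 2) + R ^ 2 * Real.arcsin (y / R) - 2 * d * y)]
  · have hsd : Real.sqrt (R ^ 2 - Real.sqrt (R ^ 2 - d ^ 2) ^ 2) = d := by
      rw [hh2, sub_sub_cancel, Real.sqrt_sq hd]
    simp only [neg_sq, neg_div, Real.arcsin_neg, hasin, hsd]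
    ring
  · exact Continuous.continuousOn (by fun_prop)
  · intro y hy
    apply hasDerivAt_lens hR
    have := sq_lt_sq' hy.1 hy.2
    nlinarith
  · exact Continuous.intervalIntegrable (by fun_prop) _ _

lemma volume_lens {R d : ℝ} (hR : 0 < R) (hd : 0 ≤ d) (hdR : d ≤ R) :
    volume (lens R d) = ENNReal.ofReal
      (2 * R ^ 2 * Real.arccos (d / R) - 2 * d * Real.sqrt (R ^ 2 - d ^ 2)) := by
  have hnn : 0 ≤ R ^ 2 - d ^ 2 := by nlinarith
  have hh2 : Real.sqrt (R ^ 2 - d ^ 2) ^ 2 = R ^ 2 - d ^ 2 := Real.sq_sqrt hnn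
  have hh0 : 0 ≤ Real.sqrt (R ^ 2 - d ^ 2) := Real.sqrt_nonneg _
  rw [← integral_lens hR hd hdR, intervalIntegral.integral_of_le (by linarith),
    ← integral_Icc_eq_integral_Ioc, Measure.volume_eq_prod,
    Measure.prod_apply_symm (measurableSet_lens R d)]
  simp only [volume_lens_slice hd]
  rw [ofReal_integral_eq_lintegral_ofReal]
  · symm
    apply setLIntegral_eq_of_support_subset
    intro y hy
    rw [Function.mem_support, Ne, ENNReal.ofReal_eq_zero, not_le] at hy
    have hlt : d < Real.sqrt (R ^ 2 - y ^ 2) := by linarith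
    rw [Real.lt_sqrt hd] at hlt
    exact abs_le.mp (Real.abs_le_sqrt (by linarith))
  · exact Continuous.integrableOn_Icc (by fun_prop)
  · filter_upwards [ae_restrict_mem measurableSet_Icc] with y hy
    have := sq_le_sq' hy.1 hy.2
    have : d ≤ Real.sqrt (R ^ 2 - y ^ 2) := Real.le_sqrt_of_sq_le (by linarith)
    simp only [Pi.zero_apply]
    linarith

lemma exists_unit_direction (v : EuclideanSpace ℝ (Fin 2)) :
    ∃ e : EuclideanSpace ℝ (Fin 2), ‖e‖ = 1 ∧ v = ‖v‖ • e := by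
  by_cases hv : v = 0
  · exact ⟨EuclideanSpace.single 0 1, by simp, by simp [hv]⟩
  · have : ‖v‖ ≠ 0 := norm_ne_zero_iff.mpr hv
    exact ⟨‖v‖⁻¹ • v, by rw [norm_smul, norm_inv, norm_norm, inv_mul_cancel₀ this],
      by rw [smul_smul, mul_inv_cancel₀ this, one_smul]⟩

/-- The rigid motion is `x ↦ b.repr (x - m)`, where `m` is the midpoint of the centers and `b` an
orthonormal basis whose first vector points from `c₁` to `c₂`. -/
lemma exists_lens_coordinates (c₁ c₂ : EuclideanSpace ℝ (Fin 2)) {R : ℝ} (hR : 0 < R) :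
    ∃ f : EuclideanSpace ℝ (Fin 2) → ℝ × ℝ, MeasurePreserving f ∧
      closedBall c₁ R ∩ closedBall c₂ R = f ⁻¹' lens R (dist c₁ c₂ / 2) := by
  obtain ⟨e, he, hv⟩ := exists_unit_direction (c₂ - c₁)
  rw [← dist_eq_norm, dist_comm] at hv
  set γ := dist c₁ c₂
  obtain ⟨b, hb⟩ := Orthonormal.exists_orthonormalBasis_extension_of_card_eq (𝕜 := ℝ)
    (ι := Fin 2) (E := EuclideanSpace ℝ (Fin 2)) (by simp) (v := fun _ => e) (s := {0})
    (by
      refine ⟨fun _ => he, fun i j hij => ?_⟩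
      exact absurd (Subsingleton.elim i j) hij)
  have hb0 : b 0 = e := hb 0 rfl
  set m : EuclideanSpace ℝ (Fin 2) := c₁ + (γ / 2) • e
  have hc₁ : c₁ = m - (γ / 2) • e := by simp [m]
  have hc₂ : c₂ = m + (γ / 2) • e := by
    rw [sub_eq_iff_eq_add.mp hv, add_assoc, ← add_smul, add_halves, add_comm]
  have hre : b.repr e = EuclideanSpace.single 0 1 := by rw [← hb0, b.repr_self]
  have hball : ∀ (t : ℝ) (x : EuclideanSpace ℝ (Fin 2)), x ∈ closedBall (m + t • e) R ↔
      (b.repr (x - m) 0 - t) ^ 2 + b.repr (x - m) 1 ^ 2 ≤ R ^ 2 := by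
    intro t x
    rw [mem_closedBall, dist_eq_norm, ← sub_sub, ← b.repr.norm_map, EuclideanSpace.norm_eq,
      Real.sqrt_le_left hR.le, map_sub b.repr (x - m), map_smul, hre]
    simp [Fin.sum_univ_two]
  refine ⟨fun x => (b.repr (x - m) 0, b.repr (x - m) 1), ?_, ?_⟩
  · exact (volume_preserving_finTwoArrow ℝ).comp
      ((EuclideanSpace.volume_preserving_symm_measurableEquiv_toLp (Fin 2)).comp
        (b.measurePreserving_repr.comp (measurePreserving_sub_right volume m)))
  · ext x
    have h1 := hball (-(γ / 2)) x
    have h2 := hball (γ / 2) x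
    rw [neg_smul, ← sub_eq_add_neg, ← hc₁, sub_neg_eq_add] at h1
    rw [← hc₂] at h2
    rw [Set.mem_inter_iff, h1, h2]
    rfl

/-- The area of the intersection of two closed discs of radius `R` in the plane
whose centers are at distance `γ`, with `0 ≤ γ ≤ 2R`, equals
`2R² arccos (γ/(2R)) − γ √(R² − γ²/4)`. -/
theorem stmt_2 (R γ : ℝ) (hR : 0 < R) (hγ0 : 0 ≤ γ) (hγ : γ ≤ 2 * R)
    (c₁ c₂ : EuclideanSpace ℝ (Fin 2)) (hd : dist c₁ c₂ = γ) :
    volume (closedBall c₁ R ∩ closedBall c₂ R) =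
      ENNReal.ofReal (2 * R ^ 2 * Real.arccos (γ / (2 * R)) -
        γ * Real.sqrt (R ^ 2 - γ ^ 2 / 4)) := by
  obtain ⟨f, hf, hfl⟩ := exists_lens_coordinates c₁ c₂ hR
  rw [hfl, hf.measure_preimage (measurableSet_lens _ _).nullMeasurableSet, hd,
    volume_lens hR (by linarith) (by linarith), div_div, mul_div_cancel₀ γ two_ne_zero,
    div_pow]
  norm_num
end

section
/- Let R > 0 and define A_s(γ) = 2R² arccos(γ/(2R)) − γ·√(R² − γ²/4) for 0 ≤ γ ≤ R. Then ∫₀^R (πR² − A_s(r)) · (2r/R²) dr = (3√3/4)·R². (This is the exact value behind the paper's approximation E[A_{v∖i} | v ∈ N_i] ≈ 1.30 R² in Lemma 2(a): the expected area of the part of a disc of radius R centered at a uniformly random point v of another disc of radius R centered at i that lies outside the disc centered at i, since the distance r = ‖vi‖ has density f(r) = 2r/R² on [0, R].) -/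
/-!
In the scaled variable `x = r / (2R)` the integral becomes
`R² ∫₀^{1/2} (8πx − 16x arccos x + 16x²√(1 − x²)) dx`. Integration by parts yields the elementary
antiderivative `discAntideriv` (lemma `hasDerivAt_discAntideriv`), whose values at `0` and `1/2` are
`π` and `π + 3√3/4`.
-/

/-- An antiderivative on `(-1, 1)` of `8πx − 16x arccos x + 16x²√(1 − x²)`. -/
noncomputable def discAntideriv (x : ℝ) : ℝ :=
  4 * Real.pi * x ^ 2 - 8 * x ^ 2 * Real.arccos x + 2 * Real.arccos x
    + (2 * x + 4 * x ^ 3) * Real.sqrt (1 - x ^ 2)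

lemma hasDerivAt_discAntideriv {x : ℝ} (h₁ : -1 < x) (h₂ : x < 1) :
    HasDerivAt discAntideriv
      (8 * Real.pi * x - 16 * x * Real.arccos x + 16 * x ^ 2 * Real.sqrt (1 - x ^ 2)) x := by
  have hpos : 0 < 1 - x ^ 2 := by nlinarith
  have hc : 0 < Real.sqrt (1 - x ^ 2) := Real.sqrt_pos.mpr hpos
  have hsq : Real.sqrt (1 - x ^ 2) ^ 2 = 1 - x ^ 2 := Real.sq_sqrt hpos.le
  have hA := Real.hasDerivAt_arccos h₁.ne' h₂.ne
  have hx2 : HasDerivAt (fun y : ℝ => y ^ 2) (2 * x) x := by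
    simpa using hasDerivAt_pow 2 x
  have hx3 : HasDerivAt (fun y : ℝ => y ^ 3) (3 * x ^ 2) x := by
    simpa using hasDerivAt_pow 3 x
  have hS := (hx2.const_sub 1).sqrt hpos.ne'
  have h := (((hx2.const_mul (4 * Real.pi)).sub ((hx2.const_mul 8).mul hA)).add
    (hA.const_mul 2)).add
    ((((hasDerivAt_id x).const_mul 2).add (hx3.const_mul 4)).mul hS)
  refine h.congr_deriv ?_
  simp only [id, Pi.add_apply]
  generalize Real.sqrt (1 - x ^ 2) = c at *
  field_simp
  linear_combination (2 + 12 * x ^ 2 - 16 * x ^ 2) * hsq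

lemma discAntideriv_zero : discAntideriv 0 = Real.pi := by
  simp [discAntideriv]
  ring

lemma discAntideriv_half : discAntideriv (1 / 2) = Real.pi + 3 * Real.sqrt 3 / 4 := by
  have hA : Real.arccos (1 / 2) = Real.pi / 3 := by
    rw [← Real.cos_pi_div_three]
    exact Real.arccos_cos (by positivity) (by linarith [Real.pi_pos])
  have hS : Real.sqrt (1 - (1 / 2) ^ 2) = Real.sqrt 3 / 2 := by
    rw [show (1 - (1 / 2) ^ 2 : ℝ) = 3 / 2 ^ 2 by norm_num, Real.sqrt_div (by norm_num),
      Real.sqrt_sq (by norm_num)]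
  rw [discAntideriv, hA, hS]
  ring

/-- Lemma 2(a) of the paper (exact form): with
`A_s(γ) = 2R² arccos (γ/(2R)) − γ √(R² − γ²/4)`,
`∫₀^R (πR² − A_s(r)) (2r/R²) dr = (3√3/4) R²`. -/
theorem stmt_3 (R : ℝ) (hR : 0 < R) :
    ∫ r in (0:ℝ)..R,
        (Real.pi * R ^ 2 -
          (2 * R ^ 2 * Real.arccos (r / (2 * R)) - r * Real.sqrt (R ^ 2 - r ^ 2 / 4))) *
        (2 * r / R ^ 2) =
      3 * Real.sqrt 3 / 4 * R ^ 2 := by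
  rw [intervalIntegral.integral_eq_sub_of_hasDerivAt
    (f := fun r => R ^ 2 * discAntideriv (r / (2 * R)))]
  · have h : R / (2 * R) = 1 / 2 := by field_simp
    simp only [h, zero_div, discAntideriv_zero, discAntideriv_half]
    ring
  · intro r hr
    rw [Set.uIcc_of_le hR.le] at hr
    have h₁ : -1 < r / (2 * R) := by
      have : 0 ≤ r / (2 * R) := div_nonneg hr.1 (by positivity)
      linarith
    have h₂ : r / (2 * R) < 1 := by
      rw [div_lt_one (by positivity)]
      linarith [hr.2]
    have hS : Real.sqrt (R ^ 2 - r ^ 2 / 4) = R * Real.sqrt (1 - (r / (2 * R)) ^ 2) := by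
      rw [show R ^ 2 - r ^ 2 / 4 = R ^ 2 * (1 - (r / (2 * R)) ^ 2) by field_simp; ring,
        Real.sqrt_mul (by positivity), Real.sqrt_sq hR.le]
    have h := ((hasDerivAt_discAntideriv h₁ h₂).comp r
      ((hasDerivAt_id r).div_const (2 * R))).const_mul (R ^ 2)
    refine h.congr_deriv ?_
    rw [hS]
    generalize Real.sqrt (1 - (r / (2 * R)) ^ 2) = c
    generalize Real.arccos (r / (2 * R)) = A
    field_simp
    ring
  · apply Continuous.intervalIntegrable
    have := Real.continuous_arccos
    fun_prop
end

section
/- Let R > 0 and define A_s(γ) = 2R² arccos(γ/(2R)) − γ·√(R² − γ²/4) for 0 ≤ γ ≤ R. Then ∫₀^R A_s(r) · (2r/R²) dr = (π − 3√3/4)·R². (This is the exact value behind the paper's approximation E[K_{ij}] ≈ 1.84 n in Lemma 2(c): the expected area of the intersection of two discs of radius R whose centers are at distance r, where r has density f(r) = 2r/R² on [0, R].) -/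
/-!
With `s(r) = √(R² − r²/4)` one has `s' = −r/(4s)` and `(arccos (r/(2R)))' = −1/(2s)` on `[0, R]`
(where `s > 0`), so the integrand has the elementary antiderivative
`F(r) = (2r² − 2R²) arccos (r/(2R)) − r³ s/(2R²) − r s`.
The integral is `F(R) − F(0)`, with `F(R) = −(3√3/4) R²` and `F(0) = −π R²`.
-/

/-- The antiderivative of the integrand, found by integrating the `arccos` term by parts. -/
lemma hasDerivAt_lens_antideriv (R r : ℝ) (hR : 0 < R) (h0 : 0 ≤ r) (h1 : r ≤ R) :
    HasDerivAt (fun r : ℝ => (2 * r ^ 2 - 2 * R ^ 2) * Real.arccos (r / (2 * R))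
        - r ^ 3 * Real.sqrt (R ^ 2 - r ^ 2 / 4) / (2 * R ^ 2) - r * Real.sqrt (R ^ 2 - r ^ 2 / 4))
      ((2 * R ^ 2 * Real.arccos (r / (2 * R)) - r * Real.sqrt (R ^ 2 - r ^ 2 / 4)) *
        (2 * r / R ^ 2)) r := by
  have hpos : 0 < R ^ 2 - r ^ 2 / 4 := by nlinarith
  have hs : 0 < Real.sqrt (R ^ 2 - r ^ 2 / 4) := Real.sqrt_pos.mpr hpos
  have hsq : Real.sqrt (R ^ 2 - r ^ 2 / 4) ^ 2 = R ^ 2 - r ^ 2 / 4 := Real.sq_sqrt hpos.le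
  have hx0 : 0 ≤ r / (2 * R) := by positivity
  have hx1 : r / (2 * R) < 1 := by rw [div_lt_one (by positivity)]; linarith
  have hroot : Real.sqrt (1 - (r / (2 * R)) ^ 2) = Real.sqrt (R ^ 2 - r ^ 2 / 4) / R := by
    rw [show 1 - (r / (2 * R)) ^ 2 = (R ^ 2 - r ^ 2 / 4) / R ^ 2 by field_simp; ring,
      Real.sqrt_div hpos.le, Real.sqrt_sq hR.le]
  have hA : HasDerivAt (fun r : ℝ => Real.arccos (r / (2 * R)))
      (-(1 / (2 * Real.sqrt (R ^ 2 - r ^ 2 / 4)))) r := by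
    have h := (Real.hasDerivAt_arccos (x := r / (2 * R)) (by linarith) hx1.ne).comp r
      ((hasDerivAt_id r).div_const (2 * R))
    rw [hroot] at h
    refine h.congr_deriv ?_
    field_simp
  have hS : HasDerivAt (fun r : ℝ => Real.sqrt (R ^ 2 - r ^ 2 / 4))
      (-r / (4 * Real.sqrt (R ^ 2 - r ^ 2 / 4))) r := by
    have h := ((((hasDerivAt_id r).pow 2).div_const 4).const_sub (R ^ 2)).sqrt hpos.ne'
    refine h.congr_deriv ?_
    simp only [id, Nat.cast_ofNat, Pi.pow_apply]
    field_simp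
    ring
  have hP : HasDerivAt (fun r : ℝ => 2 * r ^ 2 - 2 * R ^ 2) (4 * r) r := by
    refine (((hasDerivAt_pow 2 r).const_mul 2).sub_const _).congr_deriv ?_
    norm_num
    ring
  refine (((hP.mul hA).sub (((hasDerivAt_pow 3 r).mul hS).div_const (2 * R ^ 2))).sub
    ((hasDerivAt_id r).mul hS)).congr_deriv ?_
  simp only [id]
  generalize Real.sqrt (R ^ 2 - r ^ 2 / 4) = s at *
  generalize Real.arccos (r / (2 * R)) = A at *
  -- After clearing denominators only the relation `s ^ 2 = R ^ 2 - r ^ 2 / 4` is needed.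
  field_simp
  norm_num
  grind

/-- Lemma 2(c) of the paper (exact form): with
`A_s(γ) = 2R² arccos (γ/(2R)) − γ √(R² − γ²/4)`,
`∫₀^R A_s(r) (2r/R²) dr = (π − 3√3/4) R²`. -/
theorem stmt_4 (R : ℝ) (hR : 0 < R) :
    ∫ r in (0:ℝ)..R,
        (2 * R ^ 2 * Real.arccos (r / (2 * R)) - r * Real.sqrt (R ^ 2 - r ^ 2 / 4)) *
        (2 * r / R ^ 2) =
      (Real.pi - 3 * Real.sqrt 3 / 4) * R ^ 2 := by
  rw [intervalIntegral.integral_eq_sub_of_hasDerivAt (fun r hr => by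
    rw [Set.uIcc_of_le hR.le] at hr
    exact hasDerivAt_lens_antideriv R r hR hr.1 hr.2)
    (Continuous.intervalIntegrable (by fun_prop) _ _)]
  have hs : Real.sqrt (R ^ 2 - R ^ 2 / 4) = Real.sqrt 3 * R / 2 := by
    rw [show R ^ 2 - R ^ 2 / 4 = 3 * (R / 2) ^ 2 by ring, Real.sqrt_mul (by norm_num),
      Real.sqrt_sq (by positivity)]
    ring
  rw [hs]
  -- The `arccos` coefficient vanishes at `r = R`, so only `arccos 0 = π / 2` is needed.
  simp only [zero_div, Real.arccos_zero]
  field_simp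
  ring
end

section
/- Let T_d > 0, λ > 0, and 0 < Δt < T_d. Let T be uniformly distributed on [0, T_d] and S be exponentially distributed with rate λ, with T and S independent. Then Pr[T > Δt ∨ (T ≤ Δt ∧ T + S > Δt)] = 1 − Δt/T_d + (1 − e^{−λΔt})/(λ T_d). (This is Proposition 1: if a node is on a data channel at time t₁, its switch time to the control channel is uniform in the next T_d seconds, and after switching it starts transmitting after an Exp(λ_c)-distributed silent period, then the probability that it does not introduce interference to the control channel during [t₁, t₁+Δt] equals 1 − Δt/T_d + (1 − e^{−λ_c Δt})/(λ_c T_d).) -/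
/-!
The complementary event is `{T ≤ Δt ∧ T + S ≤ Δt}`. By independence and Tonelli its probability is
the average over `t`, uniform on `[0, T_d]`, of `Pr[S ≤ Δt - t] = 1 - e^{-λ(Δt - t)}` restricted to
`t ≤ Δt`, that is `T_d⁻¹ ∫₀^Δt (1 - e^{-λ(Δt - t)}) dt = T_d⁻¹ (Δt - (1 - e^{-λΔt}) / λ)`.
-/

lemma integral_one_sub_exp (lam d : ℝ) (hlam : 0 < lam) :
    ∫ t in (0 : ℝ)..d, (1 - Real.exp (-(lam * (d - t)))) =
      d - (1 - Real.exp (-lam * d)) / lam := by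
  have hderiv : ∀ t ∈ Set.uIcc 0 d,
      HasDerivAt (fun t : ℝ => t - Real.exp (-(lam * (d - t))) / lam)
        (1 - Real.exp (-(lam * (d - t)))) t := by
    intro t _
    have h : HasDerivAt (fun t : ℝ => -(lam * (d - t))) lam t := by
      refine (((hasDerivAt_id t).const_sub d).const_mul lam).neg.congr_deriv ?_
      ring
    have h2 := (hasDerivAt_id t).sub (h.exp.div_const lam)
    rw [mul_div_cancel_right₀ _ hlam.ne'] at h2
    exact h2
  rw [intervalIntegral.integral_eq_sub_of_hasDerivAt hderiv
    (Continuous.intervalIntegrable (by fun_prop) _ _)]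
  simp
  ring

open MeasureTheory ProbabilityTheory

/-- Proposition 1 of the paper: if `T ~ Uniform[0, T_d]` and `S ~ Exp(λ)` are
independent, `0 < Δt < T_d`, then
`Pr[T > Δt ∨ (T ≤ Δt ∧ T + S > Δt)] = 1 − Δt/T_d + (1 − e^{−λΔt})/(λ T_d)`. -/
theorem stmt_6 (T_d lam Δt : ℝ) (hTd : 0 < T_d) (hlam : 0 < lam)
    (hΔ0 : 0 < Δt) (hΔ : Δt < T_d)
    {Ω : Type*} [MeasurableSpace Ω] (P : Measure Ω) [IsProbabilityMeasure P]
    (T S : Ω → ℝ) (hTmeas : Measurable T) (hSmeas : Measurable S)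
    (hT : pdf.IsUniform T (Set.Icc 0 T_d) P)
    (hS : Measure.map S P = expMeasure lam)
    (hTS : IndepFun T S P) :
    P {ω | T ω > Δt ∨ (T ω ≤ Δt ∧ T ω + S ω > Δt)} =
      ENNReal.ofReal (1 - Δt / T_d + (1 - Real.exp (-lam * Δt)) / (lam * T_d)) := by
  have : IsProbabilityMeasure (expMeasure lam) := isProbabilityMeasure_expMeasure hlam
  -- `B` is the complementary event, as a set of pairs `(t, s)`.
  set B : Set (ℝ × ℝ) := {p | p.1 ≤ Δt ∧ p.1 + p.2 ≤ Δt} with hB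
  have hBm : MeasurableSet B :=
    (measurableSet_le measurable_fst measurable_const).inter
      (measurableSet_le (measurable_fst.add measurable_snd) measurable_const)
  have hpair : Measurable fun ω => (T ω, S ω) := hTmeas.prodMk hSmeas
  have hevent : {ω | T ω > Δt ∨ (T ω ≤ Δt ∧ T ω + S ω > Δt)} =
      ((fun ω => (T ω, S ω)) ⁻¹' B)ᶜ := by
    ext ω
    simp only [hB, Set.mem_ofPred_eq, Set.mem_compl_iff, Set.mem_preimage]
    grind
  have hslice : ∀ t, expMeasure lam (Prod.mk t ⁻¹' B) =
      (Set.Iic Δt).indicator (fun t => ENNReal.ofReal (1 - Real.exp (-(lam * (Δt - t))))) t := by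
    intro t
    by_cases ht : t ≤ Δt
    · have hset : Prod.mk t ⁻¹' B = Set.Iic (Δt - t) := by
        ext s
        simp only [hB, Set.mem_preimage, Set.mem_ofPred_eq, Set.mem_Iic]
        grind
      rw [hset, ← ofReal_cdf, cdf_expMeasure_eq hlam, if_pos (by linarith),
        Set.indicator_of_mem (by exact ht)]
    · have hset : Prod.mk t ⁻¹' B = ∅ := by
        ext s
        simp [hB, ht]
      rw [hset, Set.indicator_of_notMem (by exact ht), measure_empty]
  have hnn : ∀ t ∈ Set.Icc 0 Δt, 0 ≤ 1 - Real.exp (-(lam * (Δt - t))) := by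
    intro t ht
    have : 0 ≤ lam * (Δt - t) := mul_nonneg hlam.le (by linarith [ht.2])
    have := Real.exp_le_one_iff.2 (neg_nonpos.2 this)
    linarith
  have hPB : P ((fun ω => (T ω, S ω)) ⁻¹' B) =
      ENNReal.ofReal (T_d⁻¹ * (Δt - (1 - Real.exp (-lam * Δt)) / lam)) := by
    rw [← Measure.map_apply hpair hBm,
      (indepFun_iff_map_prod_eq_prod_map_map hTmeas.aemeasurable hSmeas.aemeasurable).1 hTS, hS,
      Measure.prod_apply hBm, lintegral_congr hslice, hT, ProbabilityTheory.cond,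
      lintegral_smul_measure, lintegral_indicator measurableSet_Iic,
      Measure.restrict_restrict measurableSet_Iic]
    have hinter : Set.Iic Δt ∩ Set.Icc 0 T_d = Set.Icc 0 Δt := by
      ext t
      simp only [Set.mem_inter_iff, Set.mem_Iic, Set.mem_Icc]
      grind
    rw [hinter, ← ofReal_integral_eq_lintegral_ofReal
      (Continuous.integrableOn_Icc (by fun_prop))
      ((ae_restrict_iff' measurableSet_Icc).2 (Filter.Eventually.of_forall hnn)),
      integral_Icc_eq_integral_Ioc, ← intervalIntegral.integral_of_le hΔ0.le,
      integral_one_sub_exp lam Δt hlam, Real.volume_Icc, sub_zero, smul_eq_mul,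
      ← ENNReal.ofReal_inv_of_pos hTd, ← ENNReal.ofReal_mul (inv_nonneg.2 hTd.le)]
  have hnonneg : 0 ≤ T_d⁻¹ * (Δt - (1 - Real.exp (-lam * Δt)) / lam) := by
    rw [← integral_one_sub_exp lam Δt hlam]
    exact mul_nonneg (inv_nonneg.2 hTd.le) (intervalIntegral.integral_nonneg hΔ0.le hnn)
  rw [hevent, prob_compl_eq_one_sub (hpair hBm), hPB, ← ENNReal.ofReal_one,
    ← ENNReal.ofReal_sub _ hnonneg]
  congr 1
  field_simp
  ring
end
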